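/- (Halving-with-expansion inequality.) Let $k \ge 1$ and let the search space be the cycle $C_N$ with $N \ge 4k+1$. For every candidate set $\mathcal{D} \subseteq \mathcal{N}$ and every test set $\mathcal{T} \subseteq \mathcal{N}$, if both $\mathcal{T} \cap \mathcal{D}$ and $\mathcal{D} \setminus \mathcal{T}$ are nonempty and the larger resulting set does not wrap around the whole cycle, then $\max\{|\Gamma_k(\mathcal{T} \cap \mathcal{D})|, |\Gamma_k(\mathcal{D} \setminus \mathcal{T})|\} \ge \lceil |\mathcal{D}|/2 \rceil + 2k$ whenever the maximum is less than $N$; consequently, along any adversarial answer sequence on $C_N$ one has $|\mathcal{D}_i| \ge \lceil |\mathcal{D}_{i-1}|/2 \rceil + 2k$ for the worse of the two answers. -/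

import Mathlib

/-!
One step of expansion on the cycle enlarges a nonempty set `A` by at least two vertices unless it
fills the whole cycle (`cycStep_card_add_two_le`): a vertex `c` outside the expanded set is
separated from `A` on both sides, and the last vertex before meeting `A`, going clockwise and
counterclockwise from `c`, is new; the two are distinct because `c` lies strictly between them.
As an expansion that has filled the cycle stays full, `k` steps that end with fewer than `N`
vertices add at least `2 * k` (`GammaC_card_ge`). Apply this to the larger of the two
halves `T ∩ D` and `D \ T`, which has at least `⌈|D| / 2⌉` vertices.
-/

open Finset

/-- One-step neighborhood on the cycle `C_N` (vertices `1..N`, loop at every vertex). -/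
def cycStep (N : ℕ) (A : Finset ℕ) : Finset ℕ :=
  (Finset.Icc 1 N).filter fun j => ∃ i ∈ A, j = i ∨ i + 1 = j ∨ j + 1 = i ∨
    (i = N ∧ j = 1) ∨ (i = 1 ∧ j = N)

/-- One-step neighborhood on the path `P_N` (vertices `1..N`, loop at every vertex). -/
def pathStep (N : ℕ) (A : Finset ℕ) : Finset ℕ :=
  (Finset.Icc 1 N).filter fun j => ∃ i ∈ A, j = i ∨ i + 1 = j ∨ j + 1 = i

/-- `k`-neighborhood on the cycle `C_N`. -/
def GammaC (N k : ℕ) (A : Finset ℕ) : Finset ℕ := (cycStep N)^[k] A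

/-- `k`-neighborhood on the path `P_N`. -/
def GammaP (N k : ℕ) (A : Finset ℕ) : Finset ℕ := (pathStep N)^[k] A

/-- Candidate sets `𝒟_i` for an adaptive strategy `σ` (mapping the list of previous
answers to the next test set), an answer sequence `y`, expansion `Γ`, and initial
candidate set `D0`. -/
def Dadapt (Γ : Finset ℕ → Finset ℕ) (σ : List Bool → Finset ℕ) (D0 : Finset ℕ)
    (y : ℕ → Bool) : ℕ → Finset ℕ
  | 0 => D0
  | i + 1 =>
      let D := Dadapt Γ σ D0 y i
      let T := σ ((List.range i).map y)
      if y i then Γ (T ∩ D) else Γ (D \ T)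

/-- There is an adaptive strategy with `n` tests that is successful with accuracy `s`:
for every consistent answer sequence some candidate set has size at most `s`. -/
def Successful (Γ : Finset ℕ → Finset ℕ) (D0 : Finset ℕ) (n s : ℕ) : Prop :=
  ∃ σ : List Bool → Finset ℕ, ∀ y : ℕ → Bool,
    (∀ i ≤ n, (Dadapt Γ σ D0 y i).Nonempty) →
    ∃ i ≤ n, (Dadapt Γ σ D0 y i).card ≤ s

/-- `(C_N, s)`-successful adaptive strategy with `n` tests exists. -/
def cycSuccessful (N k n s : ℕ) : Prop :=
  Successful (GammaC N k) (Finset.Icc 1 N) n s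

/-- `(P_N, s)`-successful adaptive strategy with `n` tests exists. -/
def pathSuccessful (N k n s : ℕ) : Prop :=
  Successful (GammaP N k) (Finset.Icc 1 N) n s

/-- `s^*(C_N)`: minimum accuracy achievable on the cycle. -/
noncomputable def sStarC (N k : ℕ) : ℕ := sInf {s | ∃ n, cycSuccessful N k n s}

/-- `s^*(P_N)`: minimum accuracy achievable on the path. -/
noncomputable def sStarP (N k : ℕ) : ℕ := sInf {s | ∃ n, pathSuccessful N k n s}

theorem cycStep_subset_Icc (N : ℕ) (A : Finset ℕ) : cycStep N A ⊆ Finset.Icc 1 N :=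
  Finset.filter_subset _ _

theorem subset_cycStep {N : ℕ} {A : Finset ℕ} (hA : A ⊆ Finset.Icc 1 N) : A ⊆ cycStep N A :=
  fun a ha => Finset.mem_filter.2 ⟨hA ha, a, ha, Or.inl rfl⟩

/-- The two new vertices are the ends, nearest to `A`, of the gap of `A` that contains a vertex `c`
left uncovered by `cycStep N A`. -/
theorem exists_two_new {N : ℕ} {A : Finset ℕ} (hA : A ⊆ Finset.Icc 1 N) (hne : A.Nonempty)
    {c : ℕ} (hc : c ∈ Finset.Icc 1 N) (hcA : c ∉ cycStep N A) :
    ∃ x y, x ≠ y ∧ x ∉ A ∧ y ∉ A ∧ x ∈ cycStep N A ∧ y ∈ cycStep N A := by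
  have hb : ∀ a ∈ A, 1 ≤ a ∧ a ≤ N := fun a ha => Finset.mem_Icc.1 (hA ha)
  rw [Finset.mem_Icc] at hc
  have hstep : ∀ a ∈ A, ∀ j, 1 ≤ j → j ≤ N →
      (j = a ∨ a + 1 = j ∨ j + 1 = a ∨ (a = N ∧ j = 1) ∨ (a = 1 ∧ j = N)) →
      j ∈ cycStep N A := fun a ha j h1 h2 h =>
    Finset.mem_filter.2 ⟨Finset.mem_Icc.2 ⟨h1, h2⟩, a, ha, h⟩
  have hfar : ∀ a ∈ A, c ≠ a ∧ a + 1 ≠ c ∧ c + 1 ≠ a ∧ ¬(a = N ∧ c = 1) ∧ ¬(a = 1 ∧ c = N) := by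
    intro a ha
    have := mt (hstep a ha c hc.1 hc.2) hcA
    tauto
  by_cases hR : ∃ a ∈ A, c < a
  · obtain ⟨r, hrA, hrmin⟩ := Finset.exists_min_image (A.filter (c < ·)) id
      (by obtain ⟨a, ha, h⟩ := hR; exact ⟨a, Finset.mem_filter.2 ⟨ha, h⟩⟩)
    rw [Finset.mem_filter] at hrA
    have hr : ∀ a ∈ A, c < a → r ≤ a := fun a ha h => hrmin a (Finset.mem_filter.2 ⟨ha, h⟩)
    have hrf := hfar r hrA.1
    have hrb := hb r hrA.1
    have hx : r - 1 ∉ A := fun h => by have := hr _ h (by omega); omega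
    have hxs : r - 1 ∈ cycStep N A := hstep r hrA.1 _ (by omega) (by omega) (by omega)
    by_cases hL : ∃ a ∈ A, a < c
    · obtain ⟨l, hlA, hlmax⟩ := Finset.exists_max_image (A.filter (· < c)) id
        (by obtain ⟨a, ha, h⟩ := hL; exact ⟨a, Finset.mem_filter.2 ⟨ha, h⟩⟩)
      rw [Finset.mem_filter] at hlA
      have hl : ∀ a ∈ A, a < c → a ≤ l := fun a ha h => hlmax a (Finset.mem_filter.2 ⟨ha, h⟩)
      have hlf := hfar l hlA.1
      refine ⟨r - 1, l + 1, by omega, hx, fun h => ?_, hxs,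
        hstep l hlA.1 _ (by omega) (by omega) (by omega)⟩
      have := hl _ h (by omega)
      omega
    · push Not at hL
      -- All of `A` lies above `c`; the gap continues past `N`, up to the maximum of `A`.
      obtain ⟨M, hMA, hM⟩ := Finset.exists_max_image A id hne
      have hMb := hb M hMA
      have hMf := hfar M hMA
      have hrM : r ≤ M := hM r hrA.1
      by_cases hMN : M = N
      · refine ⟨r - 1, 1, by omega, hx, fun h => ?_, hxs,
          hstep M hMA _ (by omega) (by omega) (by omega)⟩
        have := hL 1 h
        have := hfar 1 h
        omega
      · refine ⟨r - 1, M + 1, by omega, hx, fun h => ?_, hxs,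
          hstep M hMA _ (by omega) (by omega) (by omega)⟩
        have : M + 1 ≤ M := hM _ h
        omega
  · push Not at hR
    -- All of `A` lies below `c`; the gap continues past `1`, down to the minimum of `A`.
    obtain ⟨M, hMA, hM⟩ := Finset.exists_max_image A id hne
    obtain ⟨m, hmA, hm⟩ := Finset.exists_min_image A id hne
    have hmb := hb m hmA
    have hMb := hb M hMA
    have hmf := hfar m hmA
    have hMf := hfar M hMA
    have hMc := hR M hMA
    have hmM : m ≤ M := hM m hmA
    have hy : M + 1 ∉ A := fun h => by
      have : M + 1 ≤ M := hM _ h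
      omega
    have hys : M + 1 ∈ cycStep N A := hstep M hMA _ (by omega) (by omega) (by omega)
    by_cases hm1 : m = 1
    · refine ⟨N, M + 1, by omega, fun h => ?_, hy,
        hstep m hmA _ (by omega) (by omega) (by omega), hys⟩
      have := hR N h
      have := hfar N h
      omega
    · refine ⟨m - 1, M + 1, by omega, fun h => ?_, hy,
        hstep m hmA _ (by omega) (by omega) (by omega), hys⟩
      have : m ≤ m - 1 := hm _ h
      omega

theorem cycStep_card_add_two_le {N : ℕ} {A : Finset ℕ} (hA : A ⊆ Finset.Icc 1 N)
    (hne : A.Nonempty) (hlt : (cycStep N A).card < N) : A.card + 2 ≤ (cycStep N A).card := by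
  obtain ⟨c, hc, hcA⟩ : ∃ c ∈ Finset.Icc 1 N, c ∉ cycStep N A :=
    Finset.exists_mem_notMem_of_card_lt_card (by simpa using hlt)
  obtain ⟨x, y, hxy, hx, hy, hxs, hys⟩ := exists_two_new hA hne hc hcA
  have hsub : insert x (insert y A) ⊆ cycStep N A :=
    Finset.insert_subset hxs (Finset.insert_subset hys (subset_cycStep hA))
  have hcard := Finset.card_le_card hsub
  rwa [Finset.card_insert_of_notMem (by simp [hxy, hx]), Finset.card_insert_of_notMem hy] at hcard

theorem GammaC_succ (N k : ℕ) (A : Finset ℕ) :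
    GammaC N (k + 1) A = cycStep N (GammaC N k A) :=
  Function.iterate_succ_apply' _ _ _

theorem GammaC_subset_Icc {N : ℕ} {A : Finset ℕ} (hA : A ⊆ Finset.Icc 1 N) (k : ℕ) :
    GammaC N k A ⊆ Finset.Icc 1 N := by
  cases k with
  | zero => exact hA
  | succ k => rw [GammaC_succ]; exact cycStep_subset_Icc _ _

theorem GammaC_card_ge {N : ℕ} {A : Finset ℕ} (hA : A ⊆ Finset.Icc 1 N) (hne : A.Nonempty)
    (k : ℕ) (hlt : (GammaC N k A).card < N) : A.card + 2 * k ≤ (GammaC N k A).card := by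
  induction k with
  | zero => exact le_rfl
  | succ k ih =>
    rw [GammaC_succ] at hlt ⊢
    have hsub := GammaC_subset_Icc hA k
    have ih' := ih ((Finset.card_le_card (subset_cycStep hsub)).trans_lt hlt)
    have hpos := hne.card_pos
    have := cycStep_card_add_two_le hsub (Finset.card_pos.1 (by omega)) hlt
    omega

/-- Halving-with-expansion inequality on the cycle `C_N`, `N ≥ 4k+1`: for a
candidate set `𝒟` and test `𝒯` with both `𝒯 ∩ 𝒟` and `𝒟 \ 𝒯` nonempty, if the
larger of the two expanded successor sets does not wrap around the whole cycle
(its size is less than `N`), then it has size at least `⌈|𝒟|/2⌉ + 2k`. -/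
theorem cycle_halving_expansion (k N : ℕ) (hk : 1 ≤ k) (hN : 4 * k + 1 ≤ N)
    (D T : Finset ℕ) (hD : D ⊆ Finset.Icc 1 N) (hT : T ⊆ Finset.Icc 1 N)
    (h1 : (T ∩ D).Nonempty) (h0 : (D \ T).Nonempty)
    (hwrap : max (GammaC N k (T ∩ D)).card (GammaC N k (D \ T)).card < N) :
    (D.card + 1) / 2 + 2 * k ≤
      max (GammaC N k (T ∩ D)).card (GammaC N k (D \ T)).card := by
  rw [max_lt_iff] at hwrap
  have e1 := GammaC_card_ge (Finset.inter_subset_right.trans hD) h1 k hwrap.1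
  have e0 := GammaC_card_ge (Finset.sdiff_subset.trans hD) h0 k hwrap.2
  have hsum : (D ∩ T).card + (D \ T).card = D.card := Finset.card_inter_add_card_sdiff D T
  rw [Finset.inter_comm] at hsum
  omega
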